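/- arXiv:2605.14864 — 2 statements merged into one kernel-verified Lean document; each statement's English description precedes it below -/
import Mathlib

section
/- Let A be a ring and I a two-sided ideal with I² = I, and let p : A → A/I be the quotient map. Then Ext¹_A(A/I, A/I) = 0 (as right A-modules). -/
open CategoryTheory

/-!
Since `I = I²` and `A/I` is killed by `I`, every right `A`-linear map `g : I → A/I` vanishes:
`g (a * b) = g a * b = 0` for `a, b ∈ I`. As `A` is projective over itself, the long exact sequence
of `0 → I → A → A/I → 0` exhibits `Ext¹(A/I, A/I)` as a quotient of `Hom(I, A/I) = 0`.
-/

universe u v w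

section ExtVanishing

theorem subsingleton_ext_succ_of_shortExact {C : Type u} [Category.{v} C] [Abelian C]
    [HasExt.{w} C] {S : ShortComplex C} (hS : S.ShortExact) (Y : C) (n : ℕ)
    [Subsingleton (Abelian.Ext S.X₁ Y n)] [Subsingleton (Abelian.Ext S.X₂ Y (n + 1))] :
    Subsingleton (Abelian.Ext S.X₃ Y (n + 1)) := by
  refine subsingleton_of_forall_eq 0 fun x ↦ ?_
  obtain ⟨y, rfl⟩ := Abelian.Ext.contravariant_sequence_exact₃ hS Y x
    (Subsingleton.elim _ _) (add_comm 1 n)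
  rw [Subsingleton.elim y 0, Abelian.Ext.comp_zero]

theorem subsingleton_linearMap_of_smul_top_eq_top {R M N : Type*} [Semiring R]
    [AddCommMonoid M] [Module R M] [AddCommMonoid N] [Module R N] {J : Ideal R}
    (hM : J • (⊤ : Submodule R M) = ⊤) (hN : J ≤ Module.annihilator R N) :
    Subsingleton (M →ₗ[R] N) := by
  refine subsingleton_of_forall_eq 0 fun g ↦ LinearMap.ker_eq_top.mp (top_le_iff.mp ?_)
  rw [← hM, Submodule.smul_le]
  intro r hr m _
  rw [LinearMap.mem_ker, map_smul, Module.mem_annihilator.mp (hN hr)]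

theorem subsingleton_ext_one_of_smul_ker_eq_ker {R : Type u} [Ring R]
    [HasExt.{w} (ModuleCat.{v} R)] {P M N : Type v} [AddCommGroup P] [Module R P]
    [Module.Projective R P] [AddCommGroup M] [Module R M] [AddCommGroup N] [Module R N]
    {f : P →ₗ[R] M} (hf : Function.Surjective f) {J : Ideal R} (hJ : J • f.ker = f.ker)
    (hN : J ≤ Module.annihilator R N) :
    Subsingleton (Abelian.Ext (ModuleCat.of R M) (ModuleCat.of R N) 1) := by
  have ker_smul : J • (⊤ : Submodule R f.ker) = ⊤ := by
    ext x
    simp [Submodule.mem_smul_top_iff, hJ]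
  have : Subsingleton (f.ker →ₗ[R] N) := subsingleton_linearMap_of_smul_top_eq_top ker_smul hN
  have : Subsingleton (Abelian.Ext (ModuleCat.of R f.ker) (ModuleCat.of R N) 0) :=
    (Abelian.Ext.homEquiv₀.trans ModuleCat.homEquiv).subsingleton
  have : Subsingleton (Abelian.Ext (ModuleCat.of R P) (ModuleCat.of R N) 1) :=
    Abelian.Ext.subsingleton_of_projective _ _ 0
  exact subsingleton_ext_succ_of_shortExact (LinearMap.shortExact_shortComplexKer hf) _ 0

end ExtVanishing

section RightQuotient

variable {A : Type u} [Ring A] (I : TwoSidedIdeal A)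

/-- The quotient `A/I` as a right `A`-module through the projection `A → A/I`, encoded as a left
module over `Aᵐᵒᵖ` because the objects of `ModuleCat` are left modules. -/
abbrev rightQuotientModule : Module Aᵐᵒᵖ I.ringCon.Quotient :=
  Module.compHom I.ringCon.Quotient (RingHom.op I.ringCon.mk')

attribute [local instance] rightQuotientModule

theorem op_smul_rightQuotient (a : A) (q : I.ringCon.Quotient) :
    MulOpposite.op a • q = q * I.ringCon.mk' a :=
  rfl

theorem ringCon_mk'_eq_zero_iff {a : A} : I.ringCon.mk' a = 0 ↔ a ∈ I := by
  rw [← TwoSidedIdeal.mem_ker, TwoSidedIdeal.ker_ringCon_mk']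

theorem toSpanSingleton_one_rightQuotient_surjective : Function.Surjective
    (LinearMap.toSpanSingleton Aᵐᵒᵖ I.ringCon.Quotient 1) := by
  intro q
  obtain ⟨a, rfl⟩ := RingCon.mk'_surjective I.ringCon q
  exact ⟨MulOpposite.op a, one_mul (I.ringCon.mk' a)⟩

theorem ker_toSpanSingleton_one_rightQuotient :
    (LinearMap.toSpanSingleton Aᵐᵒᵖ I.ringCon.Quotient 1).ker = I.asIdealOpposite := by
  ext x
  obtain ⟨a, rfl⟩ := MulOpposite.op_surjective x
  rw [LinearMap.mem_ker, LinearMap.toSpanSingleton_apply, op_smul_rightQuotient, one_mul,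
    ringCon_mk'_eq_zero_iff, TwoSidedIdeal.mem_asIdealOpposite, MulOpposite.unop_op]

theorem asIdealOpposite_le_annihilator_rightQuotient :
    I.asIdealOpposite ≤ Module.annihilator Aᵐᵒᵖ I.ringCon.Quotient := by
  intro x hx
  obtain ⟨a, rfl⟩ := MulOpposite.op_surjective x
  have mk_eq_zero : I.ringCon.mk' a = 0 :=
    (ringCon_mk'_eq_zero_iff I).mpr (TwoSidedIdeal.mem_asIdealOpposite.mp hx)
  refine Module.mem_annihilator.mpr fun q ↦ ?_
  rw [op_smul_rightQuotient, mk_eq_zero, mul_zero]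

variable {I}

theorem isIdempotentElem_asIdealOpposite
    (hI : ∀ x ∈ I, x ∈ AddSubgroup.closure {y : A | ∃ a ∈ I, ∃ b ∈ I, y = a * b}) :
    IsIdempotentElem I.asIdealOpposite := by
  refine le_antisymm Submodule.smul_le_right fun x hx ↦ ?_
  have closure_le : AddSubgroup.closure {y : A | ∃ a ∈ I, ∃ b ∈ I, y = a * b} ≤
      (I.asIdealOpposite * I.asIdealOpposite).toAddSubgroup.comap
        (MulOpposite.opAddEquiv : A ≃+ Aᵐᵒᵖ).toAddMonoidHom := by
    rw [AddSubgroup.closure_le]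
    rintro _ ⟨a, ha, b, hb, rfl⟩
    exact Ideal.mul_mem_mul (TwoSidedIdeal.mem_asIdealOpposite.mpr hb)
      (TwoSidedIdeal.mem_asIdealOpposite.mpr ha)
  exact closure_le (hI _ (TwoSidedIdeal.mem_asIdealOpposite.mp hx))

end RightQuotient

theorem stmt1_general {A : Type u} [Ring A] {I : TwoSidedIdeal A}
    (hI : ∀ x ∈ I, x ∈ AddSubgroup.closure {y : A | ∃ a ∈ I, ∃ b ∈ I, y = a * b})
    [HasExt.{w} (ModuleCat.{u} Aᵐᵒᵖ)] {N : ModuleCat.{u} Aᵐᵒᵖ}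
    (hN : I.asIdealOpposite ≤ Module.annihilator Aᵐᵒᵖ N) :
    letI : Module Aᵐᵒᵖ I.ringCon.Quotient := rightQuotientModule I
    Subsingleton (Abelian.Ext (ModuleCat.of Aᵐᵒᵖ I.ringCon.Quotient) N 1) := by
  let : Module Aᵐᵒᵖ I.ringCon.Quotient := rightQuotientModule I
  refine subsingleton_ext_one_of_smul_ker_eq_ker
    (toSpanSingleton_one_rightQuotient_surjective I) ?_ hN
  rw [ker_toSpanSingleton_one_rightQuotient]
  exact isIdempotentElem_asIdealOpposite hI

/-- Let `A` be a ring and `I` a two-sided ideal with `I² = I` (the additive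
subgroup generated by products of two elements of `I` is all of `I`). Let `p : A → A/I` be the
quotient map. Then `Ext¹_A(A/I, A/I) = 0` where Ext is computed in the category of right
`A`-modules (i.e. left `Aᵐᵒᵖ`-modules), and `A/I` is a right `A`-module via `p`. -/
theorem stmt1 (A : Type) [Ring A] (I : TwoSidedIdeal A)
    (hI : ∀ x : A, x ∈ AddSubgroup.closure {y : A | ∃ a ∈ I, ∃ b ∈ I, y = a * b} ↔ x ∈ I) :
    letI : Module Aᵐᵒᵖ I.ringCon.Quotient :=
      Module.compHom I.ringCon.Quotient (RingHom.op I.ringCon.mk')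
    letI : HasDerivedCategory (ModuleCat.{0} Aᵐᵒᵖ) := HasDerivedCategory.standard _
    letI : HasExt.{1} (ModuleCat.{0} Aᵐᵒᵖ) := hasExt_of_hasDerivedCategory _
    Subsingleton (Abelian.Ext (ModuleCat.of Aᵐᵒᵖ I.ringCon.Quotient)
      (ModuleCat.of Aᵐᵒᵖ I.ringCon.Quotient) 1) :=
  have : HasExt.{1} (ModuleCat.{0} Aᵐᵒᵖ) := HasExt.standard _
  stmt1_general (fun x ↦ (hI x).mpr) (asIdealOpposite_le_annihilator_rightQuotient I)
end

section
/- Let p : A → B be a surjection of algebras with A a Gorenstein R-order over a local CM ring of dimension 3, B finite dimensional, self-injective, and perfect over A. Then Ext¹_A(B, B) = 0 implies (ker p)² = ker p. -/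
open CategoryTheory

/-- Ext groups exist for module categories (in the `w = 1` universe). -/
noncomputable instance hasExtModuleCat (S : Type) [Ring S] : HasExt.{1} (ModuleCat.{0} S) := by
  letI := HasDerivedCategory.standard (ModuleCat.{0} S)
  exact hasExt_of_hasDerivedCategory _

section GorensteinOrder
variable (R : Type) [CommRing R] (ω : Type) [AddCommGroup ω] [Module R ω]
variable (A : Type) [Ring A] [Algebra R A]

/-- The left `A`-action `(a • f) x = f (x * a)` on `Hom_R(A, ω)`. -/
noncomputable def homLeftAct (a : A) (f : A →ₗ[R] ω) : A →ₗ[R] ω :=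
  f ∘ₗ LinearMap.mulRight R a

/-- The right `A`-action `(f • b) x = f (b * x)` on `Hom_R(A, ω)`. -/
noncomputable def homRightAct (f : A →ₗ[R] ω) (b : A) : A →ₗ[R] ω :=
  f ∘ₗ LinearMap.mulLeft R b

/-- `A` is a *Gorenstein `R`-order* (with respect to the (canonical) module `ω`):
`RHom_R(A, ω) ≅ A` as `A`-bimodules, expressed by an additive isomorphism
`Hom_R(A, ω) ≅ A` compatible with both `A`-actions, together with the vanishing of
`Ext^i_R(A, ω)` for `i > 0`. -/
noncomputable def IsGorensteinOrder : Prop :=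
  (∃ e : (A →ₗ[R] ω) ≃+ A,
      (∀ (a : A) (f : A →ₗ[R] ω), e (homLeftAct R ω A a f) = a * e f) ∧
      (∀ (f : A →ₗ[R] ω) (b : A), e (homRightAct R ω A f b) = e f * b)) ∧
  (∀ i : ℕ, 0 < i →
    Subsingleton (Abelian.Ext (ModuleCat.of R A) (ModuleCat.of R ω) i))

end GorensteinOrder

/-- A surjection `p : A → B` makes `B` a right `A`-module. -/
noncomputable def rightModOfHom (A B : Type) [Ring A] [Ring B] (p : A →+* B) :
    Module Aᵐᵒᵖ B :=
  Module.compHom B (RingHom.op p)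

/-!
Let `I = ker p`. As `Ext¹(B, B) = 0`, every `A`-linear map `I → B` extends to `A`, and any map
`A → B` kills `I` because `I` annihilates `B`. Hence the `B`-module `I / I²` admits no nonzero map
to `B`. But an artinian self-injective ring is a cogenerator: each simple module embeds in it,
because sending the annihilator `P` of a simple module to the annihilator of a minimal left ideal
killed by `P` on the right permutes the finitely many primitive ideals, and injectivity then
extends such an embedding from a simple subquotient to the whole module. So `I / I² = 0`.
-/

universe u v w

section PrimitiveIdeals

variable {R : Type u} [Ring R]

/-- A (left) primitive ideal: the annihilator of a simple left module. Every simple module is a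
quotient `R ⧸ L`, so these are the only modules that have to be considered. -/
def IsPrimitiveIdeal (P : Ideal R) : Prop :=
  ∃ L : Ideal R, L.IsMaximal ∧ Module.annihilator R (R ⧸ L) = P

theorem isPrimitiveIdeal_annihilator (S : Type*) [AddCommGroup S] [Module R S]
    [IsSimpleModule R S] : IsPrimitiveIdeal (Module.annihilator R S) := by
  obtain ⟨L, hL, ⟨e⟩⟩ := isSimpleModule_iff_quot_maximal.mp ‹IsSimpleModule R S›
  exact ⟨L, hL, e.annihilator_eq.symm⟩

theorem le_annihilator_quotient {I L : Ideal R} [I.IsTwoSided] (h : I ≤ L) :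
    I ≤ Module.annihilator R (R ⧸ L) := by
  intro a ha
  rw [Submodule.annihilator_quotient, Submodule.mem_colon]
  exact fun r _ ↦ h (I.mul_mem_right r ha)

theorem IsPrimitiveIdeal.isTwoSided {P : Ideal R} (hP : IsPrimitiveIdeal P) : P.IsTwoSided := by
  obtain ⟨L, -, rfl⟩ := hP
  infer_instance

theorem IsPrimitiveIdeal.ne_top {P : Ideal R} (hP : IsPrimitiveIdeal P) : P ≠ ⊤ := by
  obtain ⟨L, hL, rfl⟩ := hP
  have : Nontrivial (R ⧸ L) := Submodule.Quotient.nontrivial_iff.mpr hL.ne_top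
  rw [Ne, Module.annihilator_eq_top_iff]
  exact not_subsingleton _

variable [IsArtinianRing R]

-- By the descending chain condition the intersection of the annihilators is the kernel of a map
-- from `R` to a finite product of the `T i`. That product is semisimple, so the quotient `S` of the
-- image of `R` is also a quotient of the product, and Schur's lemma applies to each factor.
theorem exists_linearEquiv_of_iInf_annihilator_le {ι : Type*} (T : ι → Type*)
    [∀ i, AddCommGroup (T i)] [∀ i, Module R (T i)] [∀ i, IsSimpleModule R (T i)]
    (S : Type*) [AddCommGroup S] [Module R S] [IsSimpleModule R S]
    (h : ⨅ i, Module.annihilator R (T i) ≤ Module.annihilator R S) :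
    ∃ i, Nonempty (T i ≃ₗ[R] S) := by
  classical
  let orbit (k : Σ i, T i) : R →ₗ[R] T k.1 := LinearMap.toSpanSingleton R (T k.1) k.2
  obtain ⟨s, hs⟩ := Finset.exists_inf_le fun k ↦ LinearMap.ker (orbit k)
  let φ : R →ₗ[R] (∀ k : s, T k.1.1) := LinearMap.pi fun k ↦ orbit k
  have := IsSimpleModule.nontrivial R S
  obtain ⟨t, ht⟩ := exists_ne (0 : S)
  have hφ : LinearMap.ker φ ≤ LinearMap.ker (LinearMap.toSpanSingleton R S t) := by
    intro r hr
    have hrs : r ∈ s.inf fun k ↦ LinearMap.ker (orbit k) := by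
      rw [Submodule.mem_finsetInf]
      exact fun k hk ↦ congrFun hr ⟨k, hk⟩
    have hrT : r ∈ ⨅ i, Module.annihilator R (T i) :=
      (Submodule.mem_iInf _).mpr fun i ↦ Module.mem_annihilator.mpr fun x ↦ hs ⟨i, x⟩ hrs
    exact Module.mem_annihilator.mp (h hrT) t
  obtain ⟨g, hg⟩ := IsSemisimpleModule.extension_property ((LinearMap.ker φ).liftQ φ le_rfl)
    (LinearMap.ker_eq_bot.mp <| Submodule.ker_liftQ_eq_bot _ _ _ le_rfl)
    ((LinearMap.ker φ).liftQ _ hφ)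
  have hg1 : g (φ 1) = t := by
    simpa using LinearMap.congr_fun hg (Submodule.Quotient.mk 1)
  have hg0 : g ≠ 0 := by
    rintro rfl
    exact ht hg1.symm
  obtain ⟨k, hk⟩ : ∃ k, g ∘ₗ LinearMap.single R (fun k : s ↦ T k.1.1) k ≠ 0 := by
    by_contra! hall
    exact hg0 (LinearMap.pi_ext' fun k ↦ by rw [hall k, LinearMap.zero_comp])
  exact ⟨k.1.1, ⟨.ofBijective _ (LinearMap.bijective_of_ne_zero hk)⟩⟩

theorem nonempty_linearEquiv_of_annihilator_le (S T : Type*) [AddCommGroup S] [Module R S]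
    [AddCommGroup T] [Module R T] [IsSimpleModule R S] [IsSimpleModule R T]
    (h : Module.annihilator R S ≤ Module.annihilator R T) : Nonempty (S ≃ₗ[R] T) := by
  obtain ⟨-, e⟩ := exists_linearEquiv_of_iInf_annihilator_le (R := R) (fun _ : Unit ↦ S) T
    (by rwa [iInf_const])
  exact e

theorem IsPrimitiveIdeal.eq_of_le {P Q : Ideal R} (hP : IsPrimitiveIdeal P)
    (hQ : IsPrimitiveIdeal Q) (h : P ≤ Q) : P = Q := by
  obtain ⟨L, hL, rfl⟩ := hP
  obtain ⟨M, hM, rfl⟩ := hQ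
  have : IsSimpleModule R (R ⧸ L) := isSimpleModule_iff_isCoatom.mpr hL.out
  have : IsSimpleModule R (R ⧸ M) := isSimpleModule_iff_isCoatom.mpr hM.out
  obtain ⟨e⟩ := nonempty_linearEquiv_of_annihilator_le _ _ h
  exact e.annihilator_eq

theorem IsPrimitiveIdeal.sup_eq_top {P Q : Ideal R} (hP : IsPrimitiveIdeal P)
    (hQ : IsPrimitiveIdeal Q) (h : P ≠ Q) : P ⊔ Q = ⊤ := by
  by_contra htop
  obtain ⟨L, hL, hle⟩ := Ideal.exists_le_maximal _ htop
  have := hP.isTwoSided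
  have := hQ.isTwoSided
  have hR : IsPrimitiveIdeal (Module.annihilator R (R ⧸ L)) := ⟨L, hL, rfl⟩
  refine h ((hP.eq_of_le hR ?_).trans (hQ.eq_of_le hR ?_).symm)
  · exact le_annihilator_quotient (le_sup_left.trans hle)
  · exact le_annihilator_quotient (le_sup_right.trans hle)

variable (R) in
theorem finite_setOf_isPrimitiveIdeal : {P : Ideal R | IsPrimitiveIdeal P}.Finite := by
  classical
  let ann (L : {L : Ideal R // L.IsMaximal}) : Ideal R := Module.annihilator R (R ⧸ L.1)
  obtain ⟨s, hs⟩ := Finset.exists_inf_le ann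
  refine (s.image ann).finite_toSet.subset ?_
  rintro _ ⟨L, hL, rfl⟩
  have hsimple (M : {L : Ideal R // L.IsMaximal}) : IsSimpleModule R (R ⧸ M.1) :=
    isSimpleModule_iff_isCoatom.mpr M.2.out
  have := hsimple ⟨L, hL⟩
  obtain ⟨M, ⟨e⟩⟩ := exists_linearEquiv_of_iInf_annihilator_le (fun M : s ↦ R ⧸ M.1.1) (R ⧸ L) <| by
    rw [← Finset.inf_univ_eq_iInf, Finset.univ_eq_attach, Finset.inf_attach s ann]
    exact hs ⟨L, hL⟩
  exact Finset.mem_coe.mpr (Finset.mem_image.mpr ⟨M, M.2, e.annihilator_eq⟩)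

end PrimitiveIdeals

section SelfInjective

variable {R : Type u} [Ring R] [Module.Injective R R]

theorem exists_eq_mul_right_of_linearMap (I : Ideal R) (f : I →ₗ[R] R) :
    ∃ c : R, ∀ x : I, f x = x * c := by
  obtain ⟨g, hg⟩ := Module.Injective.out I.subtype I.subtype_injective f
  refine ⟨g 1, fun x ↦ ?_⟩
  rw [← hg x, ← smul_eq_mul, ← map_smul, smul_eq_mul, mul_one, Submodule.subtype_apply]

-- By hypothesis the maps `x ↦ x * a`, `a ∈ s`, embed `R` in a free module; a retraction of this
-- embedding sends the standard basis to the coefficients in a presentation of `1`.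
theorem span_mulOpposite_eq_top_of_finite (s : Finset R)
    (hs : ∀ x : R, (∀ a ∈ s, x * a = 0) → x = 0) : Submodule.span Rᵐᵒᵖ (s : Set R) = ⊤ := by
  classical
  let φ : R →ₗ[R] (s → R) := LinearMap.pi fun a ↦ LinearMap.toSpanSingleton R R a.1
  have hφ : Function.Injective φ := (injective_iff_map_eq_zero φ).mpr fun x hx ↦
    hs x fun a ha ↦ congrFun hx ⟨a, ha⟩
  obtain ⟨ψ, hψ⟩ := Module.Injective.out φ hφ LinearMap.id
  have hsum : ∑ a : s, MulOpposite.op (ψ (Pi.single a 1)) • (a : R) = 1 := by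
    calc ∑ a : s, MulOpposite.op (ψ (Pi.single a 1)) • (a : R)
        = ∑ a : s, φ 1 a • ψ (Pi.single a 1) := by simp [φ]
      _ = ψ (φ 1) := by
        simp_rw [← map_smul, ← map_sum, ← Pi.single_smul, smul_eq_mul, mul_one,
          Finset.univ_sum_single]
      _ = 1 := hψ 1
  have h1 : (1 : R) ∈ Submodule.span Rᵐᵒᵖ (s : Set R) :=
    hsum ▸ sum_mem fun a _ ↦ Submodule.smul_mem _ _ (Submodule.subset_span a.2)
  exact eq_top_iff.mpr fun r _ ↦ by simpa using Submodule.smul_mem _ (MulOpposite.op r) h1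

variable [IsArtinianRing R]

theorem exists_ne_zero_forall_mul_eq_zero (J : Submodule Rᵐᵒᵖ R) (hJ : J ≠ ⊤) :
    ∃ x : R, x ≠ 0 ∧ ∀ a ∈ J, x * a = 0 := by
  obtain ⟨s, hs⟩ := Finset.exists_inf_le fun a : J ↦
    LinearMap.ker (LinearMap.toSpanSingleton R R a.1)
  by_contra! hann
  classical
  refine hJ (top_le_iff.mp ?_)
  rw [← span_mulOpposite_eq_top_of_finite (s.image Subtype.val) fun x hx ↦ ?_, Submodule.span_le]
  · rintro _ ha
    obtain ⟨a, -, rfl⟩ := Finset.mem_image.mp ha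
    exact a.2
  · by_contra hx0
    obtain ⟨a, ha, hxa⟩ := hann x hx0
    refine hxa (hs ⟨a, ha⟩ ?_)
    rw [Submodule.mem_finsetInf]
    exact fun b hb ↦ hx b (Finset.mem_image_of_mem _ hb)

theorem exists_isSimpleModule_forall_mul_eq_zero (I : Ideal R) [I.IsTwoSided] (hI : I ≠ ⊤) :
    ∃ S : Ideal R, IsSimpleModule R S ∧ ∀ x ∈ S, ∀ a ∈ I, x * a = 0 := by
  let J : Submodule Rᵐᵒᵖ R := { I with smul_mem' := fun c _ ha ↦ I.mul_mem_right c.unop ha }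
  have hJ : J ≠ ⊤ := fun h ↦ hI <| (Ideal.eq_top_iff_one I).mpr <|
    show (1 : R) ∈ J from h ▸ Submodule.mem_top
  obtain ⟨x, hx0, hx⟩ := exists_ne_zero_forall_mul_eq_zero J hJ
  obtain ⟨S, hS, hSx⟩ := (eq_bot_or_exists_atom_le (Ideal.span {x})).resolve_left
    (by simpa using hx0)
  refine ⟨S, isSimpleModule_iff_isAtom.mpr hS, fun y hy a ha ↦ ?_⟩
  obtain ⟨r, rfl⟩ := Ideal.mem_span_singleton'.mp (hSx hy)
  rw [mul_assoc, hx a ha, mul_zero]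

theorem IsPrimitiveIdeal.eq_of_annihilator_eq {P Q : Ideal R} (hP : IsPrimitiveIdeal P)
    (hQ : IsPrimitiveIdeal Q) {S T : Ideal R} [IsSimpleModule R S] [IsSimpleModule R T]
    (hSP : ∀ x ∈ S, ∀ a ∈ P, x * a = 0) (hTQ : ∀ x ∈ T, ∀ a ∈ Q, x * a = 0)
    (h : Module.annihilator R S = Module.annihilator R T) : P = Q := by
  by_contra hne
  obtain ⟨a, ha, b, hb, hab⟩ : ∃ a ∈ P, ∃ b ∈ Q, a + b = 1 :=
    Submodule.mem_sup.mp (hP.sup_eq_top hQ hne ▸ Submodule.mem_top)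
  obtain ⟨e⟩ := nonempty_linearEquiv_of_annihilator_le S T h.le
  obtain ⟨c, hc⟩ := exists_eq_mul_right_of_linearMap S (T.subtype ∘ₗ e.toLinearMap)
  have := IsSimpleModule.nontrivial R S
  obtain ⟨x, hx⟩ := exists_ne (0 : S)
  have hex : (e x : R) = x * c := hc x
  refine hx (e.map_eq_zero_iff.mp (Subtype.ext ?_))
  calc (e x : R) = e x * a + e x * b := by rw [← mul_add, hab, mul_one]
    _ = x * (c * a) := by rw [hTQ _ (e x).2 b hb, add_zero, hex, mul_assoc]
    _ = 0 := hSP x x.2 _ (P.mul_mem_left c ha)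

-- To a primitive ideal `P` attach the annihilator of a minimal left ideal killed by `P` on the
-- right (the Nakayama permutation). This is an injective self-map of a finite set, hence onto.
theorem exists_injective_linearMap_of_isSimpleModule (T : Type*) [AddCommGroup T] [Module R T]
    [IsSimpleModule R T] : ∃ f : T →ₗ[R] R, Function.Injective f := by
  have hS (P : {P : Ideal R | IsPrimitiveIdeal P}) :
      ∃ S : Ideal R, IsSimpleModule R S ∧ ∀ x ∈ S, ∀ a ∈ P.1, x * a = 0 :=
    have := P.2.isTwoSided
    exists_isSimpleModule_forall_mul_eq_zero P.1 P.2.ne_top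
  choose S hsimple hSP using hS
  let σ (P : {P : Ideal R | IsPrimitiveIdeal P}) : {P : Ideal R | IsPrimitiveIdeal P} :=
    ⟨Module.annihilator R (S P), isPrimitiveIdeal_annihilator (S P)⟩
  have hσ : Function.Injective σ := fun P Q h ↦
    Subtype.ext (P.2.eq_of_annihilator_eq Q.2 (hSP P) (hSP Q) (congrArg Subtype.val h))
  have := (finite_setOf_isPrimitiveIdeal R).to_subtype
  obtain ⟨P, hP⟩ := Finite.surjective_of_injective hσ
    ⟨Module.annihilator R T, isPrimitiveIdeal_annihilator T⟩
  obtain ⟨e⟩ := nonempty_linearEquiv_of_annihilator_le T (S P) (congrArg Subtype.val hP).ge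
  exact ⟨(S P).subtype ∘ₗ e.toLinearMap, (S P).subtype_injective.comp e.injective⟩

theorem exists_linearMap_apply_ne_zero {M : Type*} [AddCommGroup M] [Module R M] {x : M}
    (hx : x ≠ 0) : ∃ f : M →ₗ[R] R, f x ≠ 0 := by
  let N := Submodule.span R {x}
  let x' : N := ⟨x, Submodule.mem_span_singleton_self x⟩
  have : Nontrivial N := ⟨x', 0, fun h ↦ hx (congrArg Subtype.val h)⟩
  obtain ⟨K, hK⟩ := IsCoatomic.exists_coatom (Submodule R N)
  have : IsSimpleModule R (N ⧸ K) := isSimpleModule_iff_isCoatom.mpr hK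
  obtain ⟨g, hg⟩ := exists_injective_linearMap_of_isSimpleModule (R := R) (N ⧸ K)
  obtain ⟨f, hf⟩ := Module.Injective.extension_property R R N M N.subtype N.subtype_injective
    (g ∘ₗ K.mkQ)
  have hfx : f x = g (K.mkQ x') := LinearMap.congr_fun hf x'
  refine ⟨f, fun h0 ↦ hK.1 (eq_top_iff.mpr ?_)⟩
  have hxK : x' ∈ K := by
    rw [← Submodule.Quotient.mk_eq_zero]
    exact (map_eq_zero_iff g hg).mp (hfx.symm.trans h0)
  rintro ⟨y, hy⟩ -
  obtain ⟨r, rfl⟩ := Submodule.mem_span_singleton.mp hy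
  exact K.smul_mem r hxK

end SelfInjective

section IdempotentIdeal

variable {R : Type u} [Ring R]

theorem isIdempotentElem_of_forall_linearMap_eq_zero (I : Ideal R) [I.IsTwoSided]
    [IsArtinianRing (R ⧸ I)] [Module.Injective (R ⧸ I) (R ⧸ I)]
    (h : ∀ f : I →ₗ[R] R ⧸ I, f = 0) : IsIdempotentElem I := by
  refine le_antisymm Ideal.mul_le_left fun x hx ↦ ?_
  by_contra hxI
  let x' : I := ⟨x, hx⟩
  have hx' : (Submodule.Quotient.mk x' : I ⧸ I • (⊤ : Submodule R I)) ≠ 0 := by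
    rw [Ne, Submodule.Quotient.mk_eq_zero]
    intro hmem
    refine hxI (Submodule.smul_induction_on (p := fun y : I ↦ (y : R) ∈ I * I) hmem ?_ ?_)
    · exact fun r hr n _ ↦ Ideal.mul_mem_mul hr n.2
    · exact fun y z hy hz ↦ add_mem hy hz
  obtain ⟨f, hf⟩ := exists_linearMap_apply_ne_zero (R := R ⧸ I) hx'
  exact hf (LinearMap.congr_fun (h (f.restrictScalars R ∘ₗ Submodule.mkQ _)) x')

theorem exists_extension_of_subsingleton_ext [HasExt.{w} (ModuleCat.{v} R)] {L M N Q : Type v}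
    [AddCommGroup L] [Module R L] [AddCommGroup M] [Module R M] [AddCommGroup N] [Module R N]
    [AddCommGroup Q] [Module R Q] {ι : L →ₗ[R] M} {π : M →ₗ[R] N} (hι : Function.Injective ι)
    (hπ : Function.Surjective π) (hex : Function.Exact ι π)
    (hE : Subsingleton (Abelian.Ext (ModuleCat.of R N) (ModuleCat.of R Q) 1)) (f : L →ₗ[R] Q) :
    ∃ g : M →ₗ[R] Q, g ∘ₗ ι = f := by
  have hS := ModuleCat.shortComplex_shortExact
    (ModuleCat.shortComplexOfCompEqZero ι π hex.linearMap_comp_eq_zero) hex hι hπ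
  obtain ⟨g, hg⟩ := Abelian.Ext.contravariant_sequence_exact₁ hS (ModuleCat.of R Q)
    (Abelian.Ext.mk₀ (ModuleCat.ofHom f)) (n₁ := 1) rfl (Subsingleton.elim _ _)
  obtain ⟨g, rfl⟩ := (Abelian.Ext.mk₀_bijective _ _).2 g
  rw [Abelian.Ext.mk₀_comp_mk₀] at hg
  exact ⟨g.hom, congrArg ModuleCat.Hom.hom ((Abelian.Ext.mk₀_bijective _ _).1 hg)⟩

theorem isIdempotentElem_of_subsingleton_ext [HasExt.{w} (ModuleCat.{u} R)] (I : Ideal R)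
    [I.IsTwoSided] [IsArtinianRing (R ⧸ I)] [Module.Injective (R ⧸ I) (R ⧸ I)]
    (hE : Subsingleton (Abelian.Ext (ModuleCat.of R (R ⧸ I)) (ModuleCat.of R (R ⧸ I)) 1)) :
    IsIdempotentElem I := by
  refine isIdempotentElem_of_forall_linearMap_eq_zero I fun f ↦ ?_
  obtain ⟨g, rfl⟩ := exists_extension_of_subsingleton_ext I.subtype_injective I.mkQ_surjective
    (LinearMap.exact_subtype_mkQ I) hE f
  ext x
  calc g x = (x : R) • g 1 := by rw [← map_smul, smul_eq_mul, mul_one]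
    _ = 0 := by
      obtain ⟨r, hr⟩ := Ideal.Quotient.mk_surjective (g 1)
      rw [← hr]
      exact Ideal.Quotient.eq_zero_iff_mem.mpr (I.mul_mem_right r x.2)

end IdempotentIdeal

section SurjectiveRingHom

theorem subsingleton_ext_of_iso {C : Type u} [Category.{v} C] [Abelian C] [HasExt.{w} C]
    {X X' Y Y' : C} (e : X ≅ X') (e' : Y ≅ Y') (n : ℕ)
    (h : Subsingleton (Abelian.Ext X Y n)) :
    Subsingleton (Abelian.Ext X' Y' n) :=
  have : Subsingleton (((Abelian.extFunctor n).obj (.op X)).obj Y) := h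
  (((Abelian.extFunctor n).mapIso e.symm.op).app Y ≪≫
    (Abelian.extFunctorObj X' n).mapIso e').symm.addCommGroupIsoToAddEquiv.toEquiv.subsingleton

theorem isIdempotentElem_ker_of_op {A B : Type*} [Ring A] [Ring B] {p : A →+* B}
    (h : IsIdempotentElem (RingHom.ker (RingHom.op p))) : IsIdempotentElem (RingHom.ker p) := by
  refine le_antisymm Ideal.mul_le_left fun x hx ↦ ?_
  have hmem : MulOpposite.op x ∈ RingHom.ker (RingHom.op p) * RingHom.ker (RingHom.op p) :=
    h.symm ▸ congrArg MulOpposite.op hx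
  exact Submodule.mul_induction_on (C := fun y ↦ y.unop ∈ RingHom.ker p * RingHom.ker p) hmem
    (fun a ha b hb ↦ Ideal.mul_mem_mul (congrArg MulOpposite.unop hb)
      (congrArg MulOpposite.unop ha))
    fun y z ↦ add_mem

theorem mem_closure_mul_iff {A : Type*} [Ring A] {I J : Ideal A} {x : A} :
    x ∈ AddSubgroup.closure {y : A | ∃ a ∈ I, ∃ b ∈ J, y = a * b} ↔ x ∈ I * J := by
  constructor
  · refine fun hx ↦ (AddSubgroup.closure_le (K := (I * J).toAddSubgroup)).mpr ?_ hx
    rintro _ ⟨a, ha, b, hb, rfl⟩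
    exact Ideal.mul_mem_mul ha hb
  · exact fun hx ↦ Submodule.mul_induction_on hx
      (fun a ha b hb ↦ AddSubgroup.subset_closure ⟨a, ha, b, hb, rfl⟩) fun y z ↦ add_mem

theorem isIdempotentElem_ker_of_subsingleton_ext {A S M : Type u} [Ring A] [Ring S]
    [AddCommGroup M] [Module A M] [Module S M] [HasExt.{w} (ModuleCat.{u} A)] [IsArtinianRing S]
    [Module.Injective S S] {q : A →+* S} (hq : Function.Surjective q)
    (hsmul : ∀ (a : A) (m : M), a • m = q a • m) (e : S ≃ₗ[S] M)
    (hE : Subsingleton (Abelian.Ext (ModuleCat.of A M) (ModuleCat.of A M) 1)) :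
    IsIdempotentElem (RingHom.ker q) := by
  let e₁ : A ⧸ RingHom.ker q ≃+* S := RingHom.quotientKerEquivOfSurjective hq
  have := e₁.symm.isArtinianRing
  have : Module.Injective (A ⧸ RingHom.ker q) (A ⧸ RingHom.ker q) :=
    Module.Injective.of_ringEquiv e₁.symm e₁.symm.toSemilinearEquiv
  let e₂ : (A ⧸ RingHom.ker q) ≃ₗ[A] M := (e₁.toAddEquiv.trans e.toAddEquiv).toLinearEquiv <| by
    rintro a ⟨x⟩
    change e (q (a * x)) = a • e (q x)
    rw [hsmul, map_mul, ← smul_eq_mul, map_smul]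
  exact isIdempotentElem_of_subsingleton_ext _
    (subsingleton_ext_of_iso e₂.symm.toModuleIso e₂.symm.toModuleIso 1 hE)

theorem stmt16_general {A B : Type u} [Ring A] [Ring B]
    [HasExt.{w} (ModuleCat.{u} Aᵐᵒᵖ)] [IsArtinianRing Bᵐᵒᵖ]
    [Module.Injective Bᵐᵒᵖ B] {p : A →+* B} (hp : Function.Surjective p) [Module Aᵐᵒᵖ B]
    (hsmul : ∀ (a : A) (b : B), MulOpposite.op a • b = b * p a)
    (hE : Subsingleton (Abelian.Ext (ModuleCat.of Aᵐᵒᵖ B) (ModuleCat.of Aᵐᵒᵖ B) 1)) (x : A) :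
    x ∈ AddSubgroup.closure {y : A | ∃ a ∈ RingHom.ker p, ∃ b ∈ RingHom.ker p, y = a * b} ↔
      x ∈ RingHom.ker p := by
  let e : B ≃ₗ[Bᵐᵒᵖ] Bᵐᵒᵖ := MulOpposite.opAddEquiv.toLinearEquiv fun _ _ ↦ rfl
  have : Module.Injective Bᵐᵒᵖ Bᵐᵒᵖ := Module.Injective.of_ringEquiv (.refl Bᵐᵒᵖ) e
  have hq : Function.Surjective (RingHom.op p) := fun b ↦
    (hp b.unop).imp' MulOpposite.op fun _ ↦ congrArg MulOpposite.op
  have hop : IsIdempotentElem (RingHom.ker (RingHom.op p)) :=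
    isIdempotentElem_ker_of_subsingleton_ext hq (fun a ↦ hsmul a.unop) e.symm hE
  rw [mem_closure_mul_iff, (isIdempotentElem_ker_of_op hop).eq]

end SurjectiveRingHom

/-- Let `p : A → B` be a surjection of algebras with `A` a Gorenstein
`R`-order over a local (Cohen-Macaulay) noetherian ring `R` of Krull dimension `3` with
canonical module `ω`, and `B` finite dimensional over a field `K`, self-injective (as a right
module over itself), and perfect as a right `A`-module. Then `Ext¹_A(B, B) = 0` implies
`(ker p)² = ker p` (idempotency expressed via the additive closure of products). -/
theorem stmt16 (R : Type) [CommRing R] [IsNoetherianRing R] [IsLocalRing R]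
    (hdim : ringKrullDim R = 3)
    (ω : Type) [AddCommGroup ω] [Module R ω] [Module.Finite R ω]
    (A : Type) [Ring A] [Algebra R A] [Module.Finite R A]
    (hGor : IsGorensteinOrder R ω A)
    (B : Type) [Ring B] (K : Type) [Field K] [Algebra K B] [FiniteDimensional K B]
    (hselfinj : Module.Injective Bᵐᵒᵖ B)
    (p : A →+* B) (hp : Function.Surjective p) :
    letI : Module Aᵐᵒᵖ B := rightModOfHom A B p
    -- `B` is perfect as a right `A`-module:
    (Module.Finite Aᵐᵒᵖ B ∧
      ∃ n : ℕ, ∀ (L : ModuleCat.{0} Aᵐᵒᵖ) (i : ℕ), n < i →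
        Subsingleton (Abelian.Ext (ModuleCat.of Aᵐᵒᵖ B) L i)) →
    -- `Ext¹_A(B, B) = 0` implies `(ker p)² = ker p`:
    Subsingleton (Abelian.Ext (ModuleCat.of Aᵐᵒᵖ B) (ModuleCat.of Aᵐᵒᵖ B) 1) →
    ∀ x : A, x ∈ AddSubgroup.closure
        {y : A | ∃ a ∈ RingHom.ker p, ∃ b ∈ RingHom.ker p, y = a * b} ↔ x ∈ RingHom.ker p := by
  intro _ hE
  let := rightModOfHom A B p
  have : FiniteDimensional K Bᵐᵒᵖ := Module.Finite.equiv (MulOpposite.opLinearEquiv K (M := B))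
  have : IsArtinianRing Bᵐᵒᵖ := isArtinian_of_tower K inferInstance
  exact stmt16_general hp (fun _ _ ↦ rfl) hE
end
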